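/- arXiv:1903.03812 — 2 statements merged into one kernel-verified Lean document; each statement's English description precedes it below -/
import Mathlib

section
/- Let 0 < w ≤ w*, let Q : S×A → ℝ be a fixed point of the Q-Bellman operator H (H Q = Q), and let Q' : S×A → ℝ be a fixed point of H_w (H_w Q' = Q'). Then the SOR Q-values recover the optimal value function: max_{a∈A} Q'(i,a) = max_{a∈A} Q(i,a) for every i ∈ S. -/
open Finset

/-- Maximum of a real-valued function over a nonempty finite type. -/
noncomputable def fmax {A : Type*} [Fintype A] [Nonempty A] (f : A → ℝ) : ℝ :=
  Finset.univ.sup' Finset.univ_nonempty f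

/-- Sup (maximum-absolute-value) norm of a real-valued function on a nonempty finite type. -/
noncomputable def supNorm {I : Type*} [Fintype I] [Nonempty I] (f : I → ℝ) : ℝ :=
  fmax (fun i => |f i|)

/-- The over-relaxation bound `w* = min_{(i,a)} 1/(1 - α p(i|i,a))`. -/
noncomputable def wstar {S A : Type*} [Fintype S] [Fintype A] [Nonempty S] [Nonempty A]
    (p : S → A → S → ℝ) (α : ℝ) : ℝ :=
  Finset.univ.inf' Finset.univ_nonempty (fun ia : S × A => 1 / (1 - α * p ia.1 ia.2 ia.1))

/-- The SOR Q-Bellman operator `H_w`. -/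
noncomputable def Hw {S A : Type*} [Fintype S] [Fintype A] [Nonempty S] [Nonempty A]
    (p : S → A → S → ℝ) (r : S → A → ℝ) (α w : ℝ) (Q : S → A → ℝ) : S → A → ℝ :=
  fun i a => w * (r i a + α * ∑ j, p i a j * fmax (Q j)) + (1 - w) * fmax (Q i)

/-- The standard Q-Bellman operator `H`. -/
noncomputable def Hop {S A : Type*} [Fintype S] [Fintype A] [Nonempty S] [Nonempty A]
    (p : S → A → S → ℝ) (r : S → A → ℝ) (α : ℝ) (Q : S → A → ℝ) : S → A → ℝ :=
  fun i a => r i a + α * ∑ j, p i a j * fmax (Q j)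

theorem bellman_le_aux {S A : Type*} [Fintype S] [Nonempty S]
    (p : S → A → S → ℝ) (r : S → A → ℝ) (α : ℝ)
    (hp : ∀ i a j, 0 ≤ p i a j) (hsum : ∀ i a, ∑ j, p i a j = 1)
    (hα0 : 0 ≤ α) (hα1 : α < 1) (V U : S → ℝ)
    (hV : ∀ i, ∃ a, V i = r i a + α * ∑ j, p i a j * V j)
    (hU : ∀ i a, r i a + α * ∑ j, p i a j * U j ≤ U i) (i : S) : V i ≤ U i := by
  obtain ⟨m, hm⟩ := Finite.exists_max (fun i => V i - U i)
  obtain ⟨a, ha⟩ := hV m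
  have h1 := hU m a
  have h2 : ∑ j, p m a j * V j - ∑ j, p m a j * U j ≤ V m - U m := by
    calc ∑ j, p m a j * V j - ∑ j, p m a j * U j = ∑ j, p m a j * (V j - U j) := by
          rw [← Finset.sum_sub_distrib]
          exact Finset.sum_congr rfl (fun j _ => by ring)
      _ ≤ ∑ j, p m a j * (V m - U m) :=
          Finset.sum_le_sum (fun j _ => mul_le_mul_of_nonneg_left (hm j) (hp m a j))
      _ = V m - U m := by rw [← Finset.sum_mul, hsum, one_mul]
  have h3 := mul_le_mul_of_nonneg_left h2 hα0
  have h4 : V m - U m ≤ 0 := by nlinarith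
  have h5 := hm i
  linarith

theorem le_fmax_aux {A : Type*} [Fintype A] [Nonempty A] (f : A → ℝ) (a : A) : f a ≤ fmax f :=
  Finset.le_sup' f (Finset.mem_univ a)

theorem exists_fmax_aux {A : Type*} [Fintype A] [Nonempty A] (f : A → ℝ) :
    ∃ a, fmax f = f a := by
  obtain ⟨a, _, h⟩ := Finset.exists_mem_eq_sup' (Finset.univ_nonempty (α := A)) f
  exact ⟨a, h⟩

/-- If `Q` is a fixed point of `H` and `Q'` a fixed point of `H_w`, then the SOR Q-values
recover the optimal value function: `max_a Q'(i,a) = max_a Q(i,a)` for every state `i`. -/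
theorem sor_Q_recovers_value_function {S A : Type*} [Fintype S] [Fintype A]
    [Nonempty S] [Nonempty A]
    (p : S → A → S → ℝ) (r : S → A → ℝ) (α : ℝ)
    (hp : ∀ i a j, 0 ≤ p i a j) (hsum : ∀ i a, ∑ j, p i a j = 1)
    (hα0 : 0 ≤ α) (hα1 : α < 1)
    (w : ℝ) (hw0 : 0 < w) (hw : w ≤ wstar p α)
    (Q : S → A → ℝ) (hQ : Hop p r α Q = Q)
    (Q' : S → A → ℝ) (hQ' : Hw p r α w Q' = Q') :
    ∀ i, fmax (Q' i) = fmax (Q i) := by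
  have e1 : ∀ i a, r i a + α * ∑ j, p i a j * fmax (Q j) = Q i a :=
    fun i a => congrFun (congrFun hQ i) a
  have e2 : ∀ i a, w * (r i a + α * ∑ j, p i a j * fmax (Q' j)) + (1 - w) * fmax (Q' i) = Q' i a :=
    fun i a => congrFun (congrFun hQ' i) a
  have a1 : ∀ i, ∃ a, fmax (Q i) = r i a + α * ∑ j, p i a j * fmax (Q j) := by
    intro i
    obtain ⟨a, ha⟩ := exists_fmax_aux (Q i)
    exact ⟨a, by rw [e1, ha]⟩
  have b1 : ∀ i a, r i a + α * ∑ j, p i a j * fmax (Q j) ≤ fmax (Q i) := by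
    intro i a
    rw [e1]
    exact le_fmax_aux (Q i) a
  have a2 : ∀ i, ∃ a, fmax (Q' i) = r i a + α * ∑ j, p i a j * fmax (Q' j) := by
    intro i
    obtain ⟨a, ha⟩ := exists_fmax_aux (Q' i)
    refine ⟨a, mul_left_cancel₀ hw0.ne' ?_⟩
    linarith [e2 i a]
  have b2 : ∀ i a, r i a + α * ∑ j, p i a j * fmax (Q' j) ≤ fmax (Q' i) := by
    intro i a
    refine le_of_mul_le_mul_left ?_ hw0
    linarith [e2 i a, le_fmax_aux (Q' i) a]
  intro i
  exact le_antisymm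
    (bellman_le_aux p r α hp hsum hα0 hα1 (fun i => fmax (Q' i)) (fun i => fmax (Q i)) a2 b1 i)
    (bellman_le_aux p r α hp hsum hα0 hα1 (fun i => fmax (Q i)) (fun i => fmax (Q' i)) a1 b2 i)
end

section
/- For every real w with 1 ≤ w ≤ w*, the operator H_w contracts at least as fast as the discount factor: for all P, Q : S×A → ℝ, ‖H_w P − H_w Q‖ ≤ α·‖P − Q‖. -/
open Finset

theorem aux_fmax_le {A : Type*} [Fintype A] [Nonempty A] (f g : A → ℝ) (N : ℝ)
    (h : ∀ a, f a - g a ≤ N) : fmax f - fmax g ≤ N := by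
  have : fmax f ≤ fmax g + N := by
    refine Finset.sup'_le _ _ ?_
    intro a _
    have h1 : g a ≤ fmax g := Finset.le_sup' g (Finset.mem_univ a)
    linarith [h a]
  linarith

theorem aux_one_sided {S A : Type*} [Fintype S] [Fintype A]
    [Nonempty S] [Nonempty A]
    (p : S → A → S → ℝ) (r : S → A → ℝ) (α : ℝ)
    (hp : ∀ i a j, 0 ≤ p i a j) (hsum : ∀ i a, ∑ j, p i a j = 1)
    (hα0 : 0 ≤ α) (hα1 : α < 1)
    (w : ℝ) (hw1 : 1 ≤ w) (hw : w ≤ wstar p α) (P Q : S → A → ℝ) (N : ℝ) (hN : 0 ≤ N)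
    (h : ∀ i a, P i a - Q i a ≤ N) (i : S) (a : A) :
    Hw p r α w P i a - Hw p r α w Q i a ≤ α * N := by
  have hd : ∀ j, fmax (P j) - fmax (Q j) ≤ N := fun j => aux_fmax_le _ _ _ (h j)
  have hle : p i a i ≤ 1 := by
    rw [← hsum i a]
    exact Finset.single_le_sum (fun j _ => hp i a j) (Finset.mem_univ i)
  have hpos : 0 < 1 - α * p i a i := by nlinarith [hp i a i]
  have hw2 : w ≤ 1 / (1 - α * p i a i) :=
    hw.trans (Finset.inf'_le (fun ia : S × A => 1 / (1 - α * p ia.1 ia.2 ia.1))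
      (Finset.mem_univ (i, a)))
  rw [le_div_iff₀ hpos] at hw2
  have hs : p i a i * (N - (fmax (P i) - fmax (Q i))) ≤
      ∑ j, p i a j * (N - (fmax (P j) - fmax (Q j))) :=
    Finset.single_le_sum (f := fun j => p i a j * (N - (fmax (P j) - fmax (Q j))))
      (fun j _ => mul_nonneg (hp i a j) (by linarith [hd j])) (Finset.mem_univ i)
  simp only [mul_sub, Finset.sum_sub_distrib, ← Finset.sum_mul, hsum, one_mul] at hs
  unfold Hw
  have h1 := mul_le_mul_of_nonneg_left hs (mul_nonneg (by linarith : 0 ≤ w) hα0)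
  have h2 := mul_nonneg (sub_nonneg.2 (hd i)) (sub_nonneg.2 hw2)
  have h3 := mul_nonneg (mul_nonneg (sub_nonneg.2 hw1) hN) (sub_nonneg.2 hα1.le)
  linarith

/-- For `1 ≤ w ≤ w*`, the operator `H_w` contracts at least as fast as the discount factor. -/
theorem Hw_contracts_faster_than_alpha {S A : Type*} [Fintype S] [Fintype A]
    [Nonempty S] [Nonempty A]
    (p : S → A → S → ℝ) (r : S → A → ℝ) (α : ℝ)
    (hp : ∀ i a j, 0 ≤ p i a j) (hsum : ∀ i a, ∑ j, p i a j = 1)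
    (hα0 : 0 ≤ α) (hα1 : α < 1)
    (w : ℝ) (hw1 : 1 ≤ w) (hw : w ≤ wstar p α) :
    ∀ P Q : S → A → ℝ,
      supNorm (fun ia : S × A => Hw p r α w P ia.1 ia.2 - Hw p r α w Q ia.1 ia.2) ≤
        α * supNorm (fun ia : S × A => P ia.1 ia.2 - Q ia.1 ia.2) := by
  intro P Q
  have hb : ∀ i a, |P i a - Q i a| ≤ supNorm (fun ia : S × A => P ia.1 ia.2 - Q ia.1 ia.2) :=
    fun i a => Finset.le_sup' (fun ia : S × A => |P ia.1 ia.2 - Q ia.1 ia.2|)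
      (Finset.mem_univ (i, a))
  have hN : 0 ≤ supNorm (fun ia : S × A => P ia.1 ia.2 - Q ia.1 ia.2) :=
    (abs_nonneg _).trans (hb (Classical.arbitrary S) (Classical.arbitrary A))
  refine Finset.sup'_le Finset.univ_nonempty _ ?_
  rintro ⟨i, a⟩ _
  refine abs_sub_le_iff.2 ⟨?_, ?_⟩
  · exact aux_one_sided p r α hp hsum hα0 hα1 w hw1 hw P Q _ hN
      (fun i a => (abs_sub_le_iff.1 (hb i a)).1) i a
  · exact aux_one_sided p r α hp hsum hα0 hα1 w hw1 hw Q P _ hN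
      (fun i a => (abs_sub_le_iff.1 (hb i a)).2) i a
end
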